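/- Fix real numbers R₁, R₂ > 0 and a non-negative integer k. Then there exists a polynomial P in three variables, of total degree 2k with all coefficients non-negative, such that for all a, b, c ∈ ℂ satisfying Re(c−a−b) > R₁, Re(c−b) > R₂, Re b > −k + 1/2, with c not a non-positive integer, and for all x ∈ [0,1): |₂F₁(a,b;c;x)| ≤ (P(|a|,|b|,|c|)/|(c)_{2k}|) · |Γ(c+2k)/(Γ(b+k)Γ(c−b+k))|, where (c)_{2k} = c(c+1)⋯(c+2k−1) is the Pochhammer symbol. -/

import Mathlib

open Complex

noncomputable section

/-- Gauss hypergeometric function ₂F₁ as a power series sum. -/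
def hyp (a b c x : ℂ) : ℂ :=
  ∑' n : ℕ, (ascPochhammer ℂ n).eval a * (ascPochhammer ℂ n).eval b /
    ((ascPochhammer ℂ n).eval c * (n.factorial : ℂ)) * x ^ n

open MeasureTheory Filter Topology

/-- The `n`-th term of the Gauss hypergeometric series. -/
def hypTerm (a b c x : ℂ) (n : ℕ) : ℂ :=
  (ascPochhammer ℂ n).eval a * (ascPochhammer ℂ n).eval b /
    ((ascPochhammer ℂ n).eval c * (n.factorial : ℂ)) * x ^ n

theorem ascPochhammer_eval_ne_zero {c : ℂ} (hc : ∀ n : ℕ, c ≠ -(n : ℂ)) (n : ℕ) :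
    (ascPochhammer ℂ n).eval c ≠ 0 := by
  rw [Ne, ascPochhammer_eval_eq_zero_iff]
  rintro ⟨k, -, hk⟩
  exact hc k (by rw [hk, neg_neg])

theorem ascPochhammer_succ_eval_left (n : ℕ) (z : ℂ) :
    (ascPochhammer ℂ (n + 1)).eval z = z * (ascPochhammer ℂ n).eval (z + 1) := by
  simp [ascPochhammer_succ_left]

theorem hypTerm_succ {a b c x : ℂ} (hc : ∀ n : ℕ, c ≠ -(n : ℂ)) (n : ℕ) :
    hypTerm a b c x (n + 1) =
      (a + n) / (c + n) * ((b + n) / (1 + n)) * x * hypTerm a b c x n := by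
  have h1 := ascPochhammer_eval_ne_zero hc n
  have h2 : c + n ≠ 0 := fun h => hc n (eq_neg_of_add_eq_zero_left h)
  have h3 : (n.factorial : ℂ) ≠ 0 := by exact_mod_cast n.factorial_ne_zero
  have h4 : (1 + n : ℂ) ≠ 0 := by exact_mod_cast (by omega : 1 + n ≠ 0)
  have h5 : ((n + 1).factorial : ℂ) = (1 + n) * n.factorial := by
    rw [Nat.factorial_succ]; push_cast; ring
  simp only [hypTerm, ascPochhammer_succ_eval, h5, pow_succ]
  field_simp

theorem summable_hypTerm (a b : ℂ) {c x : ℂ} (hc : ∀ n : ℕ, c ≠ -(n : ℂ)) (hx : ‖x‖ < 1) :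
    Summable (hypTerm a b c x) := by
  obtain ⟨r, hr, hr1⟩ := exists_between hx
  refine summable_of_ratio_norm_eventually_le hr1 ?_
  have h (u v : ℂ) : Tendsto (fun n : ℕ => (u + n) / (v + n)) atTop (𝓝 1) := by
    simpa using tendsto_add_mul_div_add_mul_atTop_nhds u v 1 (one_ne_zero (α := ℂ))
  have hlim : Tendsto (fun n : ℕ => ‖(a + n) / (c + n) * ((b + n) / (1 + n)) * x‖) atTop
      (𝓝 ‖x‖) := by
    simpa using (((h a c).mul (h b 1)).mul_const x).norm
  filter_upwards [hlim.eventually_lt_const hr] with n hn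
  rw [hypTerm_succ hc, norm_mul]
  gcongr

/-- A contiguous relation expressing `₂F₁(a, b; c; x)` through functions with parameters
`(b + 1, c + 2)`. -/
theorem hyp_contiguous (a b : ℂ) {c x : ℂ} (hc : ∀ n : ℕ, c ≠ -(n : ℂ)) (hx : ‖x‖ < 1) :
    c * (c + 1) * hyp a b c x = c * (c + 1 - a) * hyp a (b + 1) (c + 2) x +
      (a * c - a * (c - b) * x) * hyp (a + 1) (b + 1) (c + 2) x := by
  have hc2 : ∀ n : ℕ, c + 2 ≠ -(n : ℂ) := fun n h => hc (n + 2) (by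
    push_cast; linear_combination h)
  have s1 := (summable_hypTerm a b hc hx).hasSum.mul_left (c * (c + 1))
  have s2 := (summable_hypTerm a (b + 1) hc2 hx).hasSum.mul_left (c * (c + 1 - a))
  have s3 := (summable_hypTerm (a + 1) (b + 1) hc2 hx).hasSum
  have key := (s1.sub s2).sub (s3.mul_left (a * c))
  rw [← hasSum_nat_add_iff' 1] at key
  have key2 := s3.mul_left (-(a * (c - b) * x))
  have hterm : ∀ n, c * (c + 1) * hypTerm a b c x (n + 1) -
      c * (c + 1 - a) * hypTerm a (b + 1) (c + 2) x (n + 1) -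
      a * c * hypTerm (a + 1) (b + 1) (c + 2) x (n + 1) =
      -(a * (c - b) * x) * hypTerm (a + 1) (b + 1) (c + 2) x n := by
    intro n
    have h1 := ascPochhammer_eval_ne_zero hc2 n
    have h2 : c + 2 + n ≠ 0 := fun h => hc2 n (eq_neg_of_add_eq_zero_left h)
    have h6 : c + 1 + n ≠ 0 := fun h => hc (n + 1) (by push_cast; linear_combination h)
    have h3 : (n.factorial : ℂ) ≠ 0 := by exact_mod_cast n.factorial_ne_zero
    have h4 : (1 + n : ℂ) ≠ 0 := by exact_mod_cast (by omega : 1 + n ≠ 0)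
    have h5 : ((n + 1).factorial : ℂ) = (1 + n) * n.factorial := by
      rw [Nat.factorial_succ]; push_cast; ring
    have h7 : c ≠ 0 := by simpa using hc 0
    have h8 : c + 1 ≠ 0 := fun h => hc 1 (by push_cast; linear_combination h)
    have hpc : (ascPochhammer ℂ (n + 1)).eval c =
        c * (c + 1) * (ascPochhammer ℂ n).eval (c + 2) / (c + 1 + n) := by
      rw [eq_div_iff h6]
      have e := ascPochhammer_succ_eval (n + 1) c
      rw [ascPochhammer_succ_eval_left, ascPochhammer_succ_eval_left n (c + 1)] at e
      push_cast at e
      rw [show c + 1 + 1 = c + 2 by ring] at e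
      linear_combination -e
    simp only [hypTerm, hpc, ascPochhammer_succ_eval_left n a, ascPochhammer_succ_eval_left n b,
      ascPochhammer_succ_eval n (a + 1), ascPochhammer_succ_eval n (b + 1),
      ascPochhammer_succ_eval n (c + 2), h5]
    field_simp
    ring
  have := (key.congr_fun (fun n => (hterm n).symm)).unique key2
  simp only [Finset.range_one, Finset.sum_singleton] at this
  have h0 : ∀ u v w : ℂ, hypTerm u v w x 0 = 1 := by intro u v w; simp [hypTerm]
  have hh : ∀ u v w : ℂ, ∑' n, hypTerm u v w x n = hyp u v w x := fun _ _ _ => rfl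
  simp only [h0, hh] at this
  linear_combination this

theorem hasSum_one_sub_cpow_neg (a : ℂ) {z : ℂ} (hz : ‖z‖ < 1) :
    HasSum (fun n : ℕ => (ascPochhammer ℂ n).eval a / (n.factorial : ℂ) * z ^ n)
      ((1 - z) ^ (-a)) := by
  have h := (one_div_one_sub_cpow_hasFPowerSeriesOnBall_zero a).hasSum (y := z)
    (by simpa [enorm_eq_nnnorm, ← NNReal.coe_lt_coe] using hz)
  rw [zero_add, one_div, ← cpow_neg] at h
  refine HasSum.congr_fun h fun n => ?_
  have hn : (n.factorial : ℂ) ≠ 0 := by exact_mod_cast n.factorial_ne_zero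
  have e := Ring.factorial_nsmul_multichoose_eq_ascPochhammer a n
  rw [Polynomial.ascPochhammer_smeval_eq_eval, nsmul_eq_mul, Ring.multichoose_eq] at e
  rw [← e, mul_div_cancel_left₀ _ hn]
  simp [mul_comm]

/-- The integrand of the Beta integral. -/
def betaIntegrand (u v : ℂ) (t : ℝ) : ℂ := (t : ℂ) ^ (u - 1) * (1 - (t : ℂ)) ^ (v - 1)

theorem integrableOn_betaIntegrand {u v : ℂ} (hu : 0 < u.re) (hv : 0 < v.re) :
    IntegrableOn (betaIntegrand u v) (Set.Ioo 0 1) :=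
  (intervalIntegrable_iff_integrableOn_Ioo_of_le zero_le_one).1 (betaIntegral_convergent hu hv)

theorem setIntegral_betaIntegrand (u v : ℂ) :
    ∫ t in Set.Ioo (0 : ℝ) 1, betaIntegrand u v t = betaIntegral u v := by
  rw [betaIntegral, intervalIntegral.integral_of_le zero_le_one, integral_Ioc_eq_integral_Ioo]
  rfl

theorem norm_betaIntegrand (u v : ℂ) {t : ℝ} (ht : t ∈ Set.Ioo (0 : ℝ) 1) :
    ‖betaIntegrand u v t‖ = t ^ (u.re - 1) * (1 - t) ^ (v.re - 1) := by
  have h1 : (1 - (t : ℂ)) = ((1 - t : ℝ) : ℂ) := by push_cast; rfl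
  rw [betaIntegrand, norm_mul, h1, norm_cpow_eq_rpow_re_of_pos ht.1,
    norm_cpow_eq_rpow_re_of_pos (sub_pos.2 ht.2)]
  simp

theorem betaIntegrand_add_natCast (u v : ℂ) (n : ℕ) {t : ℝ} (ht : t ∈ Set.Ioo (0 : ℝ) 1) :
    betaIntegrand (u + n) v t = (t : ℂ) ^ n * betaIntegrand u v t := by
  have h0 : (t : ℂ) ≠ 0 := by exact_mod_cast ht.1.ne'
  rw [betaIntegrand, betaIntegrand, show u + n - 1 = (u - 1) + n by ring, cpow_add _ _ h0,
    cpow_natCast]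
  ring

/-- Euler's integral representation of `₂F₁`. -/
theorem hyp_eq_integral (a : ℂ) {b c : ℂ} {x : ℝ} (hb : 0 < b.re) (hcb : 0 < (c - b).re)
    (hx0 : 0 ≤ x) (hx1 : x < 1) :
    hyp a b c x = Gamma c / (Gamma b * Gamma (c - b)) *
      ∫ t in Set.Ioo (0 : ℝ) 1, (1 - (x : ℂ) * t) ^ (-a) * betaIntegrand b (c - b) t := by
  set F : ℕ → ℝ → ℂ := fun n t =>
    (ascPochhammer ℂ n).eval a / (n.factorial : ℂ) * (x * t : ℂ) ^ n *
      betaIntegrand b (c - b) t with hF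
  have hF' : ∀ n, ∀ t ∈ Set.Ioo (0 : ℝ) 1, F n t =
      (ascPochhammer ℂ n).eval a / (n.factorial : ℂ) * (x : ℂ) ^ n *
        betaIntegrand (b + n) (c - b) t := by
    intro n t ht
    simp only [betaIntegrand_add_natCast _ _ _ ht, hF, mul_pow]
    ring
  have hbn : ∀ n : ℕ, 0 < (b + n).re := fun n => by
    simp only [add_re, natCast_re]; positivity
  have hint : ∀ n, Integrable (F n) (volume.restrict (Set.Ioo (0 : ℝ) 1)) := fun n =>
    IntegrableOn.congr_fun ((integrableOn_betaIntegrand (hbn n) hcb).const_mul _)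
      (fun t ht => (hF' n t ht).symm) measurableSet_Ioo
  have hc0 : 0 < c.re := by simp only [sub_re] at hcb; linarith
  have hne : ∀ {z : ℂ}, 0 < z.re → ∀ n : ℕ, z ≠ -(n : ℂ) := by
    rintro z hz n rfl
    simp only [neg_re, natCast_re, Left.neg_pos_iff] at hz
    exact absurd hz (by simp)
  have hsum : Summable fun n => ∫ t in Set.Ioo (0 : ℝ) 1, ‖F n t‖ := by
    have hs : Summable fun n : ℕ =>
        ‖(ascPochhammer ℂ n).eval a / (n.factorial : ℂ) * (x : ℂ) ^ n‖ *
          ∫ t in Set.Ioo (0 : ℝ) 1, ‖betaIntegrand b (c - b) t‖ :=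
      (hasSum_one_sub_cpow_neg a (z := (x : ℂ))
        (by simpa [abs_of_nonneg hx0] using hx1)).summable.norm.mul_right _
    refine hs.of_nonneg_of_le (fun n => integral_nonneg fun t => norm_nonneg _) fun n => ?_
    rw [← integral_const_mul]
    refine setIntegral_mono_on (hint n).norm
      ((integrableOn_betaIntegrand hb hcb).norm.const_mul _) measurableSet_Ioo fun t ht => ?_
    simp only [hF, norm_mul, norm_pow, mul_pow, norm_real, Real.norm_of_nonneg ht.1.le]
    have : t ^ n ≤ 1 := pow_le_one₀ ht.1.le ht.2.le
    gcongr
    exact mul_le_of_le_one_right (by positivity) this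
  have hs := hasSum_integral_of_summable_integral_norm hint hsum
  have hlim : ∫ t in Set.Ioo (0 : ℝ) 1, ∑' n, F n t =
      ∫ t in Set.Ioo (0 : ℝ) 1, (1 - (x : ℂ) * t) ^ (-a) * betaIntegrand b (c - b) t := by
    refine setIntegral_congr_fun measurableSet_Ioo fun t ht => ?_
    refine ((hasSum_one_sub_cpow_neg a (z := x * t) ?_).mul_right _).tsum_eq
    rw [norm_mul, norm_real, norm_real, Real.norm_of_nonneg hx0, Real.norm_of_nonneg ht.1.le]
    nlinarith [ht.1, ht.2]
  rw [← hlim, ← hs.tsum_eq, ← tsum_mul_left, hyp]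
  refine tsum_congr fun n => ?_
  rw [setIntegral_congr_fun measurableSet_Ioo (hF' n), integral_const_mul,
    setIntegral_betaIntegrand, betaIntegral_eq_Gamma_mul_div _ _ (hbn n) hcb,
    ← Gamma_add_nat_div_Gamma_eq b (hne hb), ← Gamma_add_nat_div_Gamma_eq c (hne hc0),
    show b + n + (c - b) = c + n by ring]
  have g1 := Gamma_ne_zero_of_re_pos hb
  have g2 := Gamma_ne_zero_of_re_pos hcb
  have g3 := Gamma_ne_zero_of_re_pos hc0
  have g4 : Gamma (c + n) ≠ 0 := Gamma_ne_zero_of_re_pos (by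
    simp only [add_re, natCast_re]; positivity)
  have h3 : (n.factorial : ℂ) ≠ 0 := by exact_mod_cast n.factorial_ne_zero
  field_simp

theorem norm_one_sub_cpow_mul_betaIntegrand_le {a b d : ℂ} {r s x t : ℝ} (hb : s ≤ b.re)
    (hd : r ≤ d.re) (hda : r ≤ (d - a).re) (hx0 : 0 ≤ x) (hx1 : x < 1)
    (ht : t ∈ Set.Ioo (0 : ℝ) 1) :
    ‖(1 - (x : ℂ) * t) ^ (-a) * betaIntegrand b d t‖ ≤ ‖betaIntegrand s r t‖ := by
  have ht1 : 0 < 1 - t := sub_pos.2 ht.2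
  have hle : 1 - t ≤ 1 - x * t := by nlinarith [ht.1]
  have h1 : (1 - (x : ℂ) * t) = ((1 - x * t : ℝ) : ℂ) := by push_cast; rfl
  rw [norm_mul, norm_betaIntegrand _ _ ht, norm_betaIntegrand _ _ ht, h1,
    norm_cpow_eq_rpow_re_of_pos (ht1.trans_le hle)]
  simp only [neg_re, ofReal_re, sub_re] at *
  have e1 : t ^ (b.re - 1) ≤ t ^ (s - 1) :=
    Real.rpow_le_rpow_of_exponent_ge ht.1 ht.2.le (by linarith)
  have e2 : (1 - x * t) ^ (-a.re) * (1 - t) ^ (d.re - 1) ≤ (1 - t) ^ (r - 1) := by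
    rcases le_total a.re 0 with ha | ha
    · have : (1 - x * t) ^ (-a.re) ≤ 1 :=
        Real.rpow_le_one (ht1.le.trans hle) (by nlinarith [mul_nonneg hx0 ht.1.le]) (by linarith)
      refine (mul_le_of_le_one_left (by positivity) this).trans ?_
      exact Real.rpow_le_rpow_of_exponent_ge ht1 (by linarith [ht.1]) (by linarith)
    · have : (1 - x * t) ^ (-a.re) ≤ (1 - t) ^ (-a.re) :=
        Real.rpow_le_rpow_of_nonpos ht1 hle (by linarith)
      refine (mul_le_mul_of_nonneg_right this (by positivity)).trans ?_
      rw [← Real.rpow_add ht1]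
      exact Real.rpow_le_rpow_of_exponent_ge ht1 (by linarith [ht.1]) (by linarith)
  calc _ = t ^ (b.re - 1) * ((1 - x * t) ^ (-a.re) * (1 - t) ^ (d.re - 1)) := by ring
    _ ≤ _ := mul_le_mul e1 e2 (mul_nonneg (Real.rpow_nonneg (ht1.le.trans hle) _)
      (by positivity)) (Real.rpow_nonneg ht.1.le _)

/-- The bound for `₂F₁(a, b; c; x)` on the region where Euler's integral converges. -/
theorem exists_norm_hyp_le (R₁ R₂ : ℝ) (hR₁ : 0 < R₁) (hR₂ : 0 < R₂) :
    ∃ K : ℝ, 0 < K ∧ ∀ a b c : ℂ, R₁ < (c - a - b).re → R₂ < (c - b).re → 1 / 2 < b.re →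
      ∀ x : ℝ, 0 ≤ x → x < 1 → ‖hyp a b c x‖ ≤ K * ‖Gamma c / (Gamma b * Gamma (c - b))‖ := by
  set r := min R₁ R₂
  have hr : 0 < r := lt_min hR₁ hR₂
  set J := ∫ t in Set.Ioo (0 : ℝ) 1, ‖betaIntegrand (1 / 2 : ℝ) r t‖
  have hJ : 0 ≤ J := integral_nonneg fun _ => norm_nonneg _
  refine ⟨J + 1, by linarith, fun a b c h1 h2 h3 x hx0 hx1 => ?_⟩
  rw [hyp_eq_integral a (by linarith) (hR₂.trans h2) hx0 hx1, norm_mul, mul_comm]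
  gcongr
  refine le_trans ?_ (le_add_of_nonneg_right zero_le_one)
  refine norm_integral_le_of_norm_le
    (integrableOn_betaIntegrand (by norm_num) (by simpa using hr)).norm ?_
  refine (ae_restrict_iff' measurableSet_Ioo).2 (Eventually.of_forall fun t ht => ?_)
  refine norm_one_sub_cpow_mul_betaIntegrand_le h3.le ((min_le_right _ _).trans h2.le)
    ((min_le_left _ _).trans ?_) hx0 hx1 ht
  simp only [sub_re] at h1 ⊢
  linarith

theorem exists_norm_hyp_mul_norm_ascPochhammer_le (R₁ R₂ : ℝ) (hR₁ : 0 < R₁) (hR₂ : 0 < R₂)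
    (k : ℕ) :
    ∃ K : ℝ, 0 < K ∧ ∀ a b c : ℂ, R₁ < (c - a - b).re → R₂ < (c - b).re →
      -(k : ℝ) + 1 / 2 < b.re → (∀ n : ℕ, c ≠ -(n : ℂ)) → ∀ x : ℝ, 0 ≤ x → x < 1 →
        ‖hyp a b c x‖ * ‖(ascPochhammer ℂ (2 * k)).eval c‖ ≤
          K * (‖a‖ + ‖b‖ + ‖c‖ + 1) ^ (2 * k) *
            ‖Gamma (c + 2 * k) / (Gamma (b + k) * Gamma (c - b + k))‖ := by
  induction k with
  | zero =>
    obtain ⟨K, hK, h⟩ := exists_norm_hyp_le R₁ R₂ hR₁ hR₂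
    refine ⟨K, hK, fun a b c h1 h2 h3 _ x hx0 hx1 => ?_⟩
    simpa using h a b c h1 h2 (by simpa using h3) x hx0 hx1
  | succ k ih =>
    obtain ⟨K, hK, ih⟩ := ih
    refine ⟨3 * 5 ^ (2 * k) * K, by positivity, fun a b c h1 h2 h3 hc x hx0 hx1 => ?_⟩
    have hc2 : ∀ n : ℕ, c + 2 ≠ -(n : ℂ) := fun n h => hc (n + 2) (by
      push_cast; linear_combination h)
    simp only [sub_re] at h1 h2
    push_cast at h3
    have i1 := ih a (b + 1) (c + 2) (by simp; linarith) (by simp; linarith) (by simp; linarith)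
      hc2 x hx0 hx1
    have i2 := ih (a + 1) (b + 1) (c + 2) (by simp; linarith) (by simp; linarith)
      (by simp; linarith) hc2 x hx0 hx1
    rw [show c + 2 + 2 * (k : ℂ) = c + 2 * (k + 1 : ℕ) by push_cast; ring,
      show b + 1 + (k : ℂ) = b + (k + 1 : ℕ) by push_cast; ring,
      show c + 2 - (b + 1) + (k : ℂ) = c - b + (k + 1 : ℕ) by push_cast; ring] at i1 i2
    set G := ‖Gamma (c + 2 * (k + 1 : ℕ)) /
      (Gamma (b + (k + 1 : ℕ)) * Gamma (c - b + (k + 1 : ℕ)))‖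
    set S := ‖a‖ + ‖b‖ + ‖c‖ + 1 with hS
    set p := ‖(ascPochhammer ℂ (2 * k)).eval (c + 2)‖
    have ha := norm_nonneg a
    have hb := norm_nonneg b
    have hcn := norm_nonneg c
    have na : ‖a + 1‖ ≤ ‖a‖ + 1 := by simpa using norm_add_le a 1
    have nb : ‖b + 1‖ ≤ ‖b‖ + 1 := by simpa using norm_add_le b 1
    have nc : ‖c + 2‖ ≤ ‖c‖ + 2 := by simpa using norm_add_le c 2
    have bound : ∀ a' : ℂ, ‖a'‖ ≤ ‖a‖ + 1 →
        K * (‖a'‖ + ‖b + 1‖ + ‖c + 2‖ + 1) ^ (2 * k) * G ≤ K * (5 * S) ^ (2 * k) * G := by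
      intro a' ha'
      gcongr
      linarith
    replace i1 := i1.trans (bound a (by linarith))
    replace i2 := i2.trans (bound (a + 1) na)
    have hxn : ‖(x : ℂ)‖ < 1 := by simpa [abs_of_nonneg hx0] using hx1
    have hp : ‖(ascPochhammer ℂ (2 * (k + 1))).eval c‖ = ‖c * (c + 1)‖ * p := by
      rw [show 2 * (k + 1) = 2 * k + 1 + 1 by ring, ascPochhammer_succ_eval_left,
        ascPochhammer_succ_eval_left, show c + 1 + 1 = c + 2 by ring, ← mul_assoc, norm_mul]
    have n1 : ‖c * (c + 1 - a)‖ ≤ S ^ 2 := by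
      rw [norm_mul, sq]
      have : ‖c + 1 - a‖ ≤ S := by
        have := norm_sub_le (c + 1) a
        have h' : ‖c + 1‖ ≤ ‖c‖ + 1 := by simpa using norm_add_le c 1
        linarith
      gcongr
      linarith
    have n2 : ‖a * c - a * (c - b) * x‖ ≤ 2 * S ^ 2 := by
      have t1 : ‖a * c‖ ≤ S ^ 2 := by
        rw [norm_mul, sq]; gcongr <;> linarith
      have t2 : ‖a * (c - b) * x‖ ≤ S ^ 2 := by
        rw [norm_mul, norm_mul]
        have : ‖c - b‖ ≤ S := by linarith [norm_sub_le c b]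
        refine (mul_le_of_le_one_right (by positivity) hxn.le).trans ?_
        rw [sq]; gcongr; linarith
      linarith [norm_sub_le (a * c) (a * (c - b) * x)]
    calc ‖hyp a b c x‖ * ‖(ascPochhammer ℂ (2 * (k + 1))).eval c‖
        = ‖c * (c + 1) * hyp a b c x‖ * p := by rw [hp, norm_mul _ (hyp a b c x)]; ring
      _ ≤ (‖c * (c + 1 - a)‖ * ‖hyp a (b + 1) (c + 2) x‖ +
          ‖a * c - a * (c - b) * x‖ * ‖hyp (a + 1) (b + 1) (c + 2) x‖) * p := by
        rw [hyp_contiguous a b hc hxn]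
        refine mul_le_mul_of_nonneg_right ((norm_add_le _ _).trans_eq ?_) (norm_nonneg _)
        rw [norm_mul _ (hyp a _ _ _), norm_mul _ (hyp (a + 1) _ _ _)]
      _ = ‖c * (c + 1 - a)‖ * (‖hyp a (b + 1) (c + 2) x‖ * p) +
          ‖a * c - a * (c - b) * x‖ * (‖hyp (a + 1) (b + 1) (c + 2) x‖ * p) := by ring
      _ ≤ S ^ 2 * (K * (5 * S) ^ (2 * k) * G) + 2 * S ^ 2 * (K * (5 * S) ^ (2 * k) * G) := by
        gcongr
      _ = 3 * 5 ^ (2 * k) * K * S ^ (2 * (k + 1)) * G := by rw [mul_pow]; ring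

open MvPolynomial in
theorem totalDegree_X_add_X_add_X_add_one :
    (X 0 + X 1 + X 2 + 1 : MvPolynomial (Fin 3) ℝ).totalDegree = 1 := by
  classical
  refine le_antisymm ?_ ?_
  · refine (totalDegree_add _ _).trans (max_le ((totalDegree_add _ _).trans
      (max_le ((totalDegree_add _ _).trans ?_) ?_)) ?_) <;> simp
  · have h := le_totalDegree (p := (X 0 + X 1 + X 2 + 1 : MvPolynomial (Fin 3) ℝ))
      (s := Finsupp.single 0 1) (by
        rw [mem_support_iff]
        simp [coeff_X, coeff_one, Finsupp.single_left_inj]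
        split_ifs <;> norm_num)
    simpa using h

open MvPolynomial in
theorem coeff_mul_nonneg {σ : Type*} {p q : MvPolynomial σ ℝ} (hp : ∀ m, 0 ≤ p.coeff m)
    (hq : ∀ m, 0 ≤ q.coeff m) (m : σ →₀ ℕ) : 0 ≤ (p * q).coeff m := by
  classical
  rw [coeff_mul]
  exact Finset.sum_nonneg fun _ _ => mul_nonneg (hp _) (hq _)

open MvPolynomial in
theorem coeff_pow_nonneg {σ : Type*} {p : MvPolynomial σ ℝ} (hp : ∀ m, 0 ≤ p.coeff m) (n : ℕ)
    (m : σ →₀ ℕ) : 0 ≤ (p ^ n).coeff m := by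
  classical
  induction n generalizing m with
  | zero => rw [pow_zero, coeff_one]; split_ifs <;> norm_num
  | succ n ih => rw [pow_succ]; exact coeff_mul_nonneg ih hp m

open MvPolynomial in
theorem totalDegree_pow_of_ne_zero {σ : Type*} {p : MvPolynomial σ ℝ} (hp : p ≠ 0) (n : ℕ) :
    (p ^ n).totalDegree = n * p.totalDegree := by
  induction n with
  | zero => simp
  | succ n ih => rw [pow_succ, totalDegree_mul_of_isDomain (pow_ne_zero n hp) hp, ih]; ring

theorem stmt13 (R₁ R₂ : ℝ) (hR₁ : 0 < R₁) (hR₂ : 0 < R₂) (k : ℕ) :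
    ∃ P : MvPolynomial (Fin 3) ℝ,
      P.totalDegree = 2 * k ∧ (∀ m, 0 ≤ P.coeff m) ∧
      ∀ a b c : ℂ,
        R₁ < (c - a - b).re → R₂ < (c - b).re → -(k : ℝ) + 1 / 2 < b.re →
        (∀ n : ℕ, c ≠ -(n : ℂ)) →
        ∀ x : ℝ, 0 ≤ x → x < 1 →
          ‖hyp a b c (x : ℂ)‖ ≤
            (MvPolynomial.eval (![‖a‖, ‖b‖, ‖c‖] : Fin 3 → ℝ) P /
              ‖(ascPochhammer ℂ (2 * k)).eval c‖) *
            ‖Complex.Gamma (c + 2 * k) /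
              (Complex.Gamma (b + k) * Complex.Gamma (c - b + k))‖ := by
  classical
  obtain ⟨K, hK, h⟩ := exists_norm_hyp_mul_norm_ascPochhammer_le R₁ R₂ hR₁ hR₂ k
  have hdeg := totalDegree_X_add_X_add_X_add_one
  set Q : MvPolynomial (Fin 3) ℝ :=
    MvPolynomial.X 0 + MvPolynomial.X 1 + MvPolynomial.X 2 + 1 with hQ
  have hQ0 : Q ≠ 0 := by
    intro h0
    simp [h0] at hdeg
  refine ⟨MvPolynomial.C K * Q ^ (2 * k), ?_, ?_, fun a b c h1 h2 h3 hc x hx0 hx1 => ?_⟩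
  · rw [MvPolynomial.totalDegree_mul_of_isDomain (by simpa using hK.ne') (pow_ne_zero _ hQ0),
      totalDegree_pow_of_ne_zero hQ0, hdeg]
    simp
  · intro m
    rw [MvPolynomial.coeff_C_mul]
    refine mul_nonneg hK.le (coeff_pow_nonneg (fun m => ?_) _ _)
    simp only [hQ, MvPolynomial.coeff_add, MvPolynomial.coeff_X, MvPolynomial.coeff_one]
    positivity
  · have hp : 0 < ‖(ascPochhammer ℂ (2 * k)).eval c‖ :=
      norm_pos_iff.2 (ascPochhammer_eval_ne_zero hc _)
    rw [div_mul_eq_mul_div, le_div_iff₀ hp]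
    simpa [hQ] using h a b c h1 h2 h3 hc x hx0 hx1

end
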